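/- Let 2 ≤ k < n, let H₀ ∈ Σ_k be a real diagonal matrix with its diagonal entries in increasing order, and let H₁ ∈ Herm(n). Then the function g(t) = d(H₀ + t·H₁, Σ_k)² is real-analytic in a neighborhood of 0, and: if the upper-left k×k block of H₁ is a real scalar multiple of the k×k identity (i.e., H₁ is tangent to Σ_k at H₀), then ord₀(g) ≥ 4; otherwise ord₀(g) = 2. Equivalently, the order of energy splitting of the linear family H₀ + t·H₁ is 1 if H₁ is not tangent to Σ_k at H₀, and at least 2 if it is. -/

import Mathlib

open Matrix

noncomputable section

/-- Sorted eigenvalues (increasing, counted with multiplicity) of a Hermitian matrix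
(junk value for non-Hermitian matrices). -/
def eigs {n : ℕ} (H : Matrix (Fin n) (Fin n) ℂ) : Fin n → ℝ :=
  if hH : H.IsHermitian then hH.eigenvalues ∘ Tuple.sort hH.eigenvalues else fun _ => 0

/-- Frobenius norm of a complex matrix. -/
def frobNorm {n : ℕ} (M : Matrix (Fin n) (Fin n) ℂ) : ℝ :=
  Real.sqrt (∑ a, ∑ b, ‖M a b‖ ^ 2)

/-- The set Σ_k of k-fold ground-state degenerate Hermitian matrices:
λ₁ = … = λ_k < λ_{k+1}. -/
def SigmaSet (n k : ℕ) : Set (Matrix (Fin n) (Fin n) ℂ) :=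
  {H | H.IsHermitian ∧ (∀ i j : Fin n, (i : ℕ) < k → (j : ℕ) < k → eigs H i = eigs H j) ∧
    ∀ i j : Fin n, (i : ℕ) < k → (j : ℕ) = k → eigs H i < eigs H j}

/-- Order of vanishing of a function at `0 ∈ ℝ`. -/
def ord0 (f : ℝ → ℝ) : ℕ∞ :=
  sInf {m : ℕ∞ | ∃ j : ℕ, m = (j : ℕ∞) ∧ iteratedDeriv j f 0 ≠ 0}

/-!
Near `t = 0` the invariant subspace of `H₀ + t·H₁` for its `k` lowest eigenvalues is the graph of
`t·Y(t)`, where `Y` solves a matrix Riccati equation and is analytic by the implicit function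
theorem. Those eigenvalues are therefore the spectrum of `c + t·(A + t·F(t))` with `A` the
upper-left block of `H₁` and `F` analytic. By the Hoffman–Wielandt inequality, the squared distance
to `Σ_k` is the total squared deviation of the `k` lowest eigenvalues from their mean. This is a
polynomial `V` in the matrix entries which is homogeneous of degree two and blind to scalar shifts,
so `g(t) = t²·V(A + t·F(t))`. On Hermitian matrices `V` vanishes only at the scalars: if `A` is not
scalar the order is `2`, and if it is then `g(t) = t⁴·V(F(t))`.
-/

open Topology Filter
open Topology Filter

section FrobeniusNorm

variable {n : ℕ}

lemma frobNorm_nonneg (M : Matrix (Fin n) (Fin n) ℂ) : 0 ≤ frobNorm M :=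
  Real.sqrt_nonneg _

lemma frobNorm_sq (M : Matrix (Fin n) (Fin n) ℂ) : frobNorm M ^ 2 = ∑ i, ∑ j, ‖M i j‖ ^ 2 :=
  Real.sq_sqrt (by positivity)

lemma ofReal_frobNorm_sq (M : Matrix (Fin n) (Fin n) ℂ) :
    ((frobNorm M ^ 2 : ℝ) : ℂ) = (Mᴴ * M).trace := by
  rw [frobNorm_sq, Finset.sum_comm]
  simp [Matrix.trace, Matrix.mul_apply, Complex.conj_mul']

lemma frobNorm_smul (t : ℝ) (M : Matrix (Fin n) (Fin n) ℂ) :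
    frobNorm (t • M) = |t| * frobNorm M := by
  rw [← sq_eq_sq₀ (frobNorm_nonneg _) (mul_nonneg (abs_nonneg t) (frobNorm_nonneg M)), mul_pow,
    frobNorm_sq, frobNorm_sq]
  simp only [Matrix.smul_apply, norm_smul, Real.norm_eq_abs, mul_pow, Finset.mul_sum]

lemma frobNorm_unitary_mul_mul_unitary (U V : unitaryGroup (Fin n) ℂ)
    (M : Matrix (Fin n) (Fin n) ℂ) : frobNorm (U.1 * M * V.1) = frobNorm M := by
  have hU : (U.1)ᴴ * U.1 = 1 := Unitary.coe_star_mul_self U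
  have hV : V.1 * (V.1)ᴴ = 1 := Unitary.coe_mul_star_self V
  rw [← sq_eq_sq₀ (frobNorm_nonneg _) (frobNorm_nonneg M), ← Complex.ofReal_inj,
    ofReal_frobNorm_sq, ofReal_frobNorm_sq, Matrix.trace_mul_comm]
  calc (U.1 * M * V.1 * (U.1 * M * V.1)ᴴ).trace
      = (U.1 * (M * (V.1 * (V.1)ᴴ) * Mᴴ) * (U.1)ᴴ).trace := by
        simp only [Matrix.conjTranspose_mul, Matrix.mul_assoc]
    _ = (Mᴴ * M).trace := by
        rw [Matrix.trace_mul_cycle, hU, hV, Matrix.one_mul, Matrix.mul_one, Matrix.trace_mul_comm]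

end FrobeniusNorm

section HoffmanWielandt

lemma le_sum_mul_of_mem_doublyStochastic {ι : Type*} [Fintype ι] [DecidableEq ι]
    {C : ι → ι → ℝ} {D : Matrix ι ι ℝ} {x : ℝ} (hD : D ∈ doublyStochastic ℝ ι)
    (hperm : ∀ σ : Equiv.Perm ι, x ≤ ∑ i, C i (σ i)) : x ≤ ∑ i, ∑ j, C i j * D i j := by
  have hconvex : Convex ℝ {D : Matrix ι ι ℝ | x ≤ ∑ i, ∑ j, C i j * D i j} := by
    refine convex_halfSpace_ge ⟨fun D D' => ?_, fun r D => ?_⟩ x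
    · simp only [Matrix.add_apply, mul_add, Finset.sum_add_distrib]
    · simp only [Matrix.smul_apply, smul_eq_mul, Finset.mul_sum, mul_left_comm]
  rw [← SetLike.mem_coe, doublyStochastic_eq_convexHull_permMatrix] at hD
  refine convexHull_min ?_ hconvex hD
  rintro _ ⟨σ, rfl⟩
  simpa [Equiv.Perm.permMatrix, PEquiv.toMatrix_apply] using hperm σ

lemma norm_sq_mem_doublyStochastic {ι : Type*} [Fintype ι] [DecidableEq ι]
    (U : unitaryGroup ι ℂ) :
    (Matrix.of fun i j => ‖(U : Matrix ι ι ℂ) i j‖ ^ 2) ∈ doublyStochastic ℝ ι := by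
  have hrow : ∀ i, (U.1 * star U.1) i i = (1 : Matrix ι ι ℂ) i i := fun i =>
    congrFun₂ (Unitary.coe_mul_star_self U) i i
  have hcol : ∀ j, (star U.1 * U.1) j j = (1 : Matrix ι ι ℂ) j j := fun j =>
    congrFun₂ (Unitary.coe_star_mul_self U) j j
  simp only [Matrix.mul_apply, Matrix.star_apply, Matrix.one_apply_eq, RCLike.star_def,
    Complex.mul_conj', Complex.conj_mul'] at hrow hcol
  refine mem_doublyStochastic_iff_sum.2 ⟨fun i j => sq_nonneg _, fun i => ?_, fun j => ?_⟩
  · simpa only [Matrix.of_apply] using mod_cast hrow i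
  · simpa only [Matrix.of_apply] using mod_cast hcol j

lemma sum_sq_sub_le_sum_sq_sub_comp_perm {ι : Type*} [Fintype ι] {a b : ι → ℝ}
    (hab : Monovary a b) (σ : Equiv.Perm ι) :
    ∑ i, (a i - b i) ^ 2 ≤ ∑ i, (a i - b (σ i)) ^ 2 := by
  have hmul := hab.sum_mul_comp_perm_le_sum_mul (σ := σ)
  have hsq : ∑ i, b (σ i) ^ 2 = ∑ i, b i ^ 2 := Equiv.sum_comp σ fun i => b i ^ 2
  simp only [sub_sq, Finset.sum_add_distrib, Finset.sum_sub_distrib, mul_assoc, ← Finset.mul_sum,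
    hsq]
  linarith

variable {n : ℕ}

/-- The Hermitian matrix with eigenvalues `a`, diagonalised by the orthonormal columns of `U`:
a way to compare and modify spectra while keeping the eigenvectors. -/
def spectralMatrix (U : unitaryGroup (Fin n) ℂ) (a : Fin n → ℝ) : Matrix (Fin n) (Fin n) ℂ :=
  U.1 * diagonal (fun i => (a i : ℂ)) * star U.1

lemma isHermitian_diagonal_ofReal {ι : Type*} [DecidableEq ι] (a : ι → ℝ) :
    (diagonal fun i => (a i : ℂ)).IsHermitian :=
  isHermitian_diagonal_of_self_adjoint _ (funext fun i => Complex.conj_ofReal (a i))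

lemma isHermitian_spectralMatrix (U : unitaryGroup (Fin n) ℂ) (a : Fin n → ℝ) :
    (spectralMatrix U a).IsHermitian :=
  isHermitian_mul_mul_conjTranspose _ (isHermitian_diagonal_ofReal a)

lemma spectralMatrix_one (a : Fin n → ℝ) :
    spectralMatrix 1 a = diagonal fun i => (a i : ℂ) := by
  simp [spectralMatrix]

lemma star_mul_spectralMatrix (U : unitaryGroup (Fin n) ℂ) (a : Fin n → ℝ) :
    star U.1 * spectralMatrix U a =
      diagonal (fun i => (a i : ℂ)) * star U.1 := by
  rw [spectralMatrix, Matrix.mul_assoc, ← Matrix.mul_assoc, Unitary.coe_star_mul_self,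
    Matrix.one_mul]

lemma spectralMatrix_mul (U : unitaryGroup (Fin n) ℂ) (a : Fin n → ℝ) :
    spectralMatrix U a * U.1 =
      U.1 * diagonal (fun i => (a i : ℂ)) := by
  rw [spectralMatrix, Matrix.mul_assoc, Unitary.coe_star_mul_self, Matrix.mul_one]

lemma star_mul_spectralMatrix_sub_mul (U V : unitaryGroup (Fin n) ℂ) (a b : Fin n → ℝ) :
    star U.1 * (spectralMatrix U a - spectralMatrix V b) * V.1 =
      diagonal (fun i => (a i : ℂ)) * (star U.1 * V.1) -
        (star U.1 * V.1) * diagonal (fun i => (b i : ℂ)) := by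
  rw [Matrix.mul_sub, Matrix.sub_mul, star_mul_spectralMatrix, Matrix.mul_assoc,
    Matrix.mul_assoc (star U.1), spectralMatrix_mul, Matrix.mul_assoc]

lemma frobNorm_spectralMatrix_sub_sq (U V : unitaryGroup (Fin n) ℂ) (a b : Fin n → ℝ) :
    frobNorm (spectralMatrix U a - spectralMatrix V b) ^ 2 =
      ∑ i, ∑ j, (a i - b j) ^ 2 * ‖(star U * V).1 i j‖ ^ 2 := by
  rw [← frobNorm_unitary_mul_mul_unitary (star U) V, Unitary.coe_star,
    star_mul_spectralMatrix_sub_mul, frobNorm_sq]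
  refine Finset.sum_congr rfl fun i _ => Finset.sum_congr rfl fun j _ => ?_
  rw [Matrix.sub_apply, diagonal_mul, mul_diagonal, mul_comm _ (b j : ℂ), ← sub_mul,
    ← Complex.ofReal_sub, norm_mul, mul_pow, Complex.norm_real, Real.norm_eq_abs, sq_abs]
  rfl

lemma frobNorm_spectralMatrix_sub_spectralMatrix_sq (U : unitaryGroup (Fin n) ℂ)
    (a b : Fin n → ℝ) :
    frobNorm (spectralMatrix U a - spectralMatrix U b) ^ 2 = ∑ i, (a i - b i) ^ 2 := by
  simp [frobNorm_spectralMatrix_sub_sq, Matrix.one_apply, apply_ite]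

theorem hoffman_wielandt (U V : unitaryGroup (Fin n) ℂ) {a b : Fin n → ℝ} (ha : Monotone a)
    (hb : Monotone b) :
    ∑ i, (a i - b i) ^ 2 ≤ frobNorm (spectralMatrix U a - spectralMatrix V b) ^ 2 := by
  rw [frobNorm_spectralMatrix_sub_sq]
  exact le_sum_mul_of_mem_doublyStochastic (C := fun i j => (a i - b j) ^ 2)
    (norm_sq_mem_doublyStochastic (star U * V))
    (sum_sq_sub_le_sum_sq_sub_comp_perm (ha.monovary hb))

lemma monotone_eigs (H : Matrix (Fin n) (Fin n) ℂ) : Monotone (eigs H) := by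
  unfold eigs
  split_ifs with h
  · exact Tuple.monotone_sort _
  · exact monotone_const

lemma exists_spectralMatrix_eigs_eq {H : Matrix (Fin n) (Fin n) ℂ} (hH : H.IsHermitian) :
    ∃ U, spectralMatrix U (eigs H) = H := by
  set σ := Tuple.sort hH.eigenvalues
  set V := hH.eigenvectorUnitary.1
  have hV : V * star V = 1 := Unitary.coe_mul_star_self hH.eigenvectorUnitary
  have hunitary : V.submatrix id σ ∈ unitaryGroup (Fin n) ℂ := by
    rw [mem_unitaryGroup_iff, star_eq_conjTranspose, conjTranspose_submatrix, submatrix_mul_equiv,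
      ← star_eq_conjTranspose, hV, submatrix_id_id]
  have hdiag : (diagonal fun i => (eigs H i : ℂ)) =
      (diagonal fun i => (hH.eigenvalues i : ℂ)).submatrix σ σ := by
    rw [submatrix_diagonal_equiv, eigs, dif_pos hH]
    rfl
  refine ⟨⟨_, hunitary⟩, ?_⟩
  rw [spectralMatrix, hdiag, star_eq_conjTranspose, conjTranspose_submatrix, submatrix_mul_equiv,
    submatrix_mul_equiv, submatrix_id_id]
  exact hH.spectral_theorem.symm

lemma sum_eigs_sub_eigs_sq_le {H G : Matrix (Fin n) (Fin n) ℂ} (hH : H.IsHermitian)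
    (hG : G.IsHermitian) : ∑ i, (eigs H i - eigs G i) ^ 2 ≤ frobNorm (H - G) ^ 2 := by
  obtain ⟨U, hU⟩ := exists_spectralMatrix_eigs_eq hH
  obtain ⟨V, hV⟩ := exists_spectralMatrix_eigs_eq hG
  simpa only [hU, hV] using hoffman_wielandt U V (monotone_eigs H) (monotone_eigs G)

lemma abs_eigs_sub_eigs_le {H G : Matrix (Fin n) (Fin n) ℂ} (hH : H.IsHermitian)
    (hG : G.IsHermitian) (i : Fin n) : |eigs H i - eigs G i| ≤ frobNorm (H - G) :=
  abs_le_of_sq_le_sq ((Finset.single_le_sum (fun j _ => sq_nonneg (eigs H j - eigs G j))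
    (Finset.mem_univ i)).trans (sum_eigs_sub_eigs_sq_le hH hG)) (frobNorm_nonneg _)

lemma eigs_spectralMatrix (U : unitaryGroup (Fin n) ℂ) {a : Fin n → ℝ} (ha : Monotone a) :
    eigs (spectralMatrix U a) = a := by
  obtain ⟨V, hV⟩ := exists_spectralMatrix_eigs_eq (isHermitian_spectralMatrix U a)
  have hle := hoffman_wielandt V U (monotone_eigs (spectralMatrix U a)) ha
  rw [hV, sub_self, frobNorm_sq] at hle
  simp only [Matrix.zero_apply, norm_zero, ne_eq, OfNat.ofNat_ne_zero, not_false_eq_true, zero_pow,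
    Finset.sum_const_zero] at hle
  have hzero := (Finset.sum_eq_zero_iff_of_nonneg fun i _ => sq_nonneg _).1
    (hle.antisymm (Finset.sum_nonneg fun i _ => sq_nonneg _))
  exact funext fun i => sub_eq_zero.1 (sq_eq_zero_iff.1 (hzero i (Finset.mem_univ i)))

lemma tendsto_eigs_add_smul {H₀ H₁ : Matrix (Fin n) (Fin n) ℂ} (hH₀ : H₀.IsHermitian)
    (hH₁ : H₁.IsHermitian) (i : Fin n) :
    Tendsto (fun t : ℝ => eigs (H₀ + t • H₁) i) (𝓝 0) (𝓝 (eigs H₀ i)) := by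
  refine tendsto_iff_dist_tendsto_zero.2
    (squeeze_zero (fun _ => dist_nonneg) (g := fun t : ℝ => |t| * frobNorm H₁) (fun t => ?_) ?_)
  · simpa only [Real.dist_eq, add_sub_cancel_left, frobNorm_smul] using
      abs_eigs_sub_eigs_le (hH₀.add (hH₁.smul (IsSelfAdjoint.all t))) hH₀ i
  · exact Continuous.tendsto' (by fun_prop) _ _ (by simp)

end HoffmanWielandt

section DistanceToSigma

open scoped BigOperators

/-- The total squared deviation of the family `a` from its mean. -/
def sqDeviation {ι : Type*} [Fintype ι] (a : ι → ℝ) : ℝ :=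
  ∑ i, (a i - 𝔼 j, a j) ^ 2

lemma sqDeviation_le {ι : Type*} [Fintype ι] (a : ι → ℝ) (x : ℝ) :
    sqDeviation a ≤ ∑ i, (a i - x) ^ 2 := by
  have hmean : (Fintype.card ι : ℝ) * 𝔼 j, a j = ∑ j, a j := Fintype.card_mul_expect a
  have hsplit : ∑ i, (a i - x) ^ 2 = sqDeviation a + Fintype.card ι * (𝔼 j, a j - x) ^ 2 := by
    simp only [sqDeviation, sub_sq, Finset.sum_add_distrib, Finset.sum_sub_distrib,
      ← Finset.sum_mul, ← Finset.mul_sum, Finset.sum_const, Finset.card_univ, nsmul_eq_mul,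
      ← hmean]
    ring
  rw [hsplit]
  exact le_add_of_nonneg_right (by positivity)

/-- The squared Frobenius distance from `H` to `Σ_k`, the function whose order along a linear
family is the object of study; the infimum of the empty set is `0`. -/
def sqDist {n : ℕ} (k : ℕ) (H : Matrix (Fin n) (Fin n) ℂ) : ℝ :=
  (sInf ((fun G => frobNorm (H - G)) '' SigmaSet n k)) ^ 2

variable {k m : ℕ}

lemma monotone_append {α : Type*} [Preorder α] {a : Fin k → α} {b : Fin m → α}
    (ha : Monotone a) (hb : Monotone b) (hab : ∀ i j, a i ≤ b j) : Monotone (Fin.append a b) := by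
  intro i j
  cases i using Fin.addCases with
  | left i =>
    cases j using Fin.addCases with
    | left j => simpa only [Fin.append_left, Fin.le_def, Fin.val_castAdd] using @ha i j
    | right j => simpa only [Fin.append_left, Fin.append_right] using fun _ => hab i j
  | right i =>
    cases j using Fin.addCases with
    | left j => simp only [Fin.le_def, Fin.val_natAdd, Fin.val_castAdd]; omega
    | right j => simpa only [Fin.append_right, Fin.natAdd_le_natAdd_iff] using @hb i j

lemma degenerate_and_gap_iff {a : Fin (k + m) → ℝ} (ha : Monotone a) (hk : 0 < k) :
    ((∀ i j : Fin (k + m), (i : ℕ) < k → (j : ℕ) < k → a i = a j) ∧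
      ∀ i j : Fin (k + m), (i : ℕ) < k → (j : ℕ) = k → a i < a j) ↔
    ∃ c, (∀ i, a (Fin.castAdd m i) = c) ∧ ∀ j, c < a (Fin.natAdd k j) := by
  constructor
  · rintro ⟨hdeg, hgap⟩
    have hfirst (j : Fin m) : Fin.natAdd k ⟨0, j.pos⟩ ≤ Fin.natAdd k j := by
      simp [Fin.le_def]
    exact ⟨a (Fin.castAdd m ⟨0, hk⟩), fun i => hdeg _ _ i.isLt hk,
      fun j => (hgap _ _ hk rfl).trans_le (ha (hfirst j))⟩
  · rintro ⟨c, hlow, hhigh⟩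
    have hlow' (i : Fin (k + m)) (hi : (i : ℕ) < k) : a i = c := hlow ⟨i, hi⟩
    refine ⟨fun i j hi hj => (hlow' i hi).trans (hlow' j hj).symm, fun i j hi hj => ?_⟩
    have hj' : j = Fin.natAdd k ⟨0, by omega⟩ := Fin.ext hj
    rw [hlow' i hi, hj']
    exact hhigh _

lemma mem_sigmaSet_iff (hk : 0 < k) {G : Matrix (Fin (k + m)) (Fin (k + m)) ℂ} :
    G ∈ SigmaSet (k + m) k ↔ G.IsHermitian ∧
      ∃ c, (∀ i, eigs G (Fin.castAdd m i) = c) ∧ ∀ j, c < eigs G (Fin.natAdd k j) :=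
  and_congr_right fun _ => degenerate_and_gap_iff (monotone_eigs G) hk

lemma sqDeviation_le_frobNorm_sub_sq (hk : 0 < k) {H G : Matrix (Fin (k + m)) (Fin (k + m)) ℂ}
    (hH : H.IsHermitian) (hG : G ∈ SigmaSet (k + m) k) :
    sqDeviation (fun i => eigs H (Fin.castAdd m i)) ≤ frobNorm (H - G) ^ 2 := by
  obtain ⟨hGherm, c, hlow, -⟩ := (mem_sigmaSet_iff hk).1 hG
  calc sqDeviation (fun i => eigs H (Fin.castAdd m i))
      ≤ ∑ i, (eigs H (Fin.castAdd m i) - eigs G (Fin.castAdd m i)) ^ 2 := by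
        simpa only [hlow] using sqDeviation_le _ c
    _ ≤ ∑ i, (eigs H i - eigs G i) ^ 2 := by
        rw [Fin.sum_univ_add]
        exact le_add_of_nonneg_right (by positivity)
    _ ≤ frobNorm (H - G) ^ 2 := sum_eigs_sub_eigs_sq_le hH hGherm

lemma exists_mem_sigmaSet_frobNorm_sub_sq_eq (hk : 0 < k)
    {H : Matrix (Fin (k + m)) (Fin (k + m)) ℂ} (hH : H.IsHermitian)
    (hgap : ∀ i j, eigs H (Fin.castAdd m i) < eigs H (Fin.natAdd k j)) :
    ∃ G ∈ SigmaSet (k + m) k,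
      frobNorm (H - G) ^ 2 = sqDeviation fun i => eigs H (Fin.castAdd m i) := by
  obtain ⟨U, hU⟩ := exists_spectralMatrix_eigs_eq hH
  set c := 𝔼 i, eigs H (Fin.castAdd m i) with hc
  set a := Fin.append (fun _ : Fin k => c) fun j => eigs H (Fin.natAdd k j)
  have hlow (i : Fin k) : a (Fin.castAdd m i) = c := Fin.append_left _ _ i
  have hhigh (j : Fin m) : a (Fin.natAdd k j) = eigs H (Fin.natAdd k j) :=
    Fin.append_right (fun _ => c) (fun j => eigs H (Fin.natAdd k j)) j
  have hmean (j : Fin m) : c < eigs H (Fin.natAdd k j) :=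
    Finset.expect_lt (fun i _ => (hgap i j).le) ⟨⟨0, hk⟩, Finset.mem_univ _, hgap _ j⟩
  have ha : Monotone a := monotone_append monotone_const
    (fun i j hij => monotone_eigs H ((Fin.natAdd_le_natAdd_iff k).2 hij)) fun _ j => (hmean j).le
  refine ⟨spectralMatrix U a, (mem_sigmaSet_iff hk).2 ⟨isHermitian_spectralMatrix U a, c, ?_⟩, ?_⟩
  · rw [eigs_spectralMatrix U ha]
    exact ⟨hlow, fun j => (hmean j).trans_eq (hhigh j).symm⟩
  · nth_rw 1 [← hU]
    rw [frobNorm_spectralMatrix_sub_spectralMatrix_sq, Fin.sum_univ_add]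
    simp [hlow, hhigh, sqDeviation, ← hc]

theorem sqDist_eq_sqDeviation (hk : 0 < k) {H : Matrix (Fin (k + m)) (Fin (k + m)) ℂ}
    (hH : H.IsHermitian) (hgap : ∀ i j, eigs H (Fin.castAdd m i) < eigs H (Fin.natAdd k j)) :
    sqDist k H = sqDeviation fun i => eigs H (Fin.castAdd m i) := by
  obtain ⟨G₀, hG₀, heq⟩ := exists_mem_sigmaSet_frobNorm_sub_sq_eq hk hH hgap
  have hleast : IsLeast ((fun G => frobNorm (H - G)) '' SigmaSet (k + m) k)
      (frobNorm (H - G₀)) := by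
    refine ⟨Set.mem_image_of_mem _ hG₀, Set.forall_mem_image.2 fun G hG => ?_⟩
    rw [← sq_le_sq₀ (frobNorm_nonneg _) (frobNorm_nonneg _), heq]
    exact sqDeviation_le_frobNorm_sub_sq hk hH hG
  rw [sqDist, hleast.csInf_eq, heq]

end DistanceToSigma

section TraceVariance

variable {ι 𝕜 : Type*} [Fintype ι] [Field 𝕜]

/-- The sum of the squared deviations of the eigenvalues of `M` from their mean, written as a
polynomial in the entries of `M` so that it is visibly analytic along analytic families. -/
def traceVariance (M : Matrix ι ι 𝕜) : 𝕜 :=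
  (M * M).trace - M.trace ^ 2 / Fintype.card ι

open scoped ComplexOrder in
lemma re_trace_conjTranspose_mul_self_eq_zero_iff {M : Matrix ι ι ℂ} :
    (Mᴴ * M).trace.re = 0 ↔ M = 0 := by
  rw [← Matrix.trace_conjTranspose_mul_self_eq_zero_iff]
  have hnonneg := (Matrix.posSemidef_conjTranspose_mul_self M).trace_nonneg
  exact ⟨fun h => Complex.ext h (Complex.nonneg_iff.1 hnonneg).2.symm, fun h => by rw [h]; rfl⟩

lemma analyticAt_re_traceVariance {M : ℝ → Matrix ι ι ℂ} {t : ℝ}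
    (hM : ∀ i j, AnalyticAt ℝ (fun s => M s i j) t) :
    AnalyticAt ℝ (fun s => (traceVariance (M s)).re) t := by
  have hvar : AnalyticAt ℝ (fun s => traceVariance (M s)) t := by
    simp only [traceVariance, Matrix.trace, Matrix.diag, Matrix.mul_apply, div_eq_mul_inv]
    fun_prop
  exact (Complex.reCLM.analyticAt _).comp hvar

variable [DecidableEq ι]

lemma traceVariance_smul_one_add_smul [CharZero 𝕜] [Nonempty ι] (c t : 𝕜)
    (M : Matrix ι ι 𝕜) : traceVariance (c • 1 + t • M) = t ^ 2 * traceVariance M := by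
  have hsq : (c • 1 + t • M) * (c • 1 + t • M) =
      (c * c) • 1 + (2 * c * t) • M + (t * t) • (M * M) := by
    simp only [add_mul, mul_add, smul_mul_assoc, mul_smul_comm, one_mul, mul_one]
    module
  have hcard : (Fintype.card ι : 𝕜) ≠ 0 := Nat.cast_ne_zero.2 Fintype.card_ne_zero
  simp only [traceVariance, hsq, Matrix.trace_add, Matrix.trace_smul, Matrix.trace_one,
    smul_eq_mul]
  field_simp
  ring

lemma traceVariance_eq_of_semiconjBy {P M N : Matrix ι ι 𝕜} (hP : IsUnit P)
    (h : SemiconjBy P M N) : traceVariance M = traceVariance N := by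
  obtain ⟨P, rfl⟩ := hP
  have htrace {M N : Matrix ι ι 𝕜} (h : SemiconjBy P.1 M N) : M.trace = N.trace := by
    rw [← Matrix.trace_units_conj P M, h.eq, Matrix.mul_assoc, Units.mul_inv, Matrix.mul_one]
  rw [traceVariance, traceVariance, htrace h, htrace (h.mul_right h)]

lemma traceVariance_diagonal_ofReal (a : ι → ℝ) :
    traceVariance (diagonal fun i => (a i : ℂ)) = (sqDeviation a : ℂ) := by
  rcases isEmpty_or_nonempty ι with hι | hι
  · simp [traceVariance, sqDeviation, Matrix.trace]
  have hcard : (Fintype.card ι : ℂ) ≠ 0 := Nat.cast_ne_zero.2 Fintype.card_ne_zero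
  simp only [traceVariance, sqDeviation, Fintype.expect_eq_sum_div_card, diagonal_mul_diagonal,
    Matrix.trace_diagonal, sub_sq, Finset.sum_add_distrib, Finset.sum_sub_distrib,
    ← Finset.sum_mul, ← Finset.mul_sum, Finset.sum_const, Finset.card_univ, nsmul_eq_mul]
  push_cast
  simp only [← sq]
  field_simp
  ring

lemma re_traceVariance_eq_zero_iff [Nonempty ι] {A : Matrix ι ι ℂ} (hA : A.IsHermitian) :
    (traceVariance A).re = 0 ↔ ∃ c : ℝ, A = (c : ℂ) • 1 := by
  have hshift (c : ℂ) : traceVariance A = traceVariance (A - c • 1) := by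
    have h := traceVariance_smul_one_add_smul c 1 (A - c • 1)
    rwa [one_smul, add_sub_cancel, one_pow, one_mul] at h
  constructor
  · intro hzero
    set c := (∑ i, hA.eigenvalues i) / Fintype.card ι
    have hcard : (Fintype.card ι : ℂ) ≠ 0 := Nat.cast_ne_zero.2 Fintype.card_ne_zero
    have htraceless : (A - (c : ℂ) • 1).trace = 0 := by
      simp [c, hA.trace_eq_sum_eigenvalues, hcard]
    have hherm : (A - (c : ℂ) • 1)ᴴ = A - (c : ℂ) • 1 := by
      simp [hA.eq]
    refine ⟨c, sub_eq_zero.1 (re_trace_conjTranspose_mul_self_eq_zero_iff.1 ?_)⟩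
    rw [hshift c, traceVariance, htraceless] at hzero
    simpa only [hherm, ne_eq, OfNat.ofNat_ne_zero, not_false_eq_true, zero_pow, zero_div,
      sub_zero] using hzero
  · rintro ⟨c, rfl⟩
    rw [hshift c, sub_self]
    simp [traceVariance]

end TraceVariance

section AnalyticGraph

open scoped ContDiff

theorem exists_analyticAt_eventually_add_smul_eq_zero {𝕜 E F : Type*} [RCLike 𝕜]
    [NormedAddCommGroup E] [NormedSpace 𝕜 E] [CompleteSpace E]
    [NormedAddCommGroup F] [NormedSpace 𝕜 F] [CompleteSpace F]
    (L : E ≃L[𝕜] F) (b : F) {N : 𝕜 × E → F} (hN : ContDiff 𝕜 ω N) :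
    ∃ Y : 𝕜 → E, AnalyticAt 𝕜 Y 0 ∧ ∀ᶠ t in 𝓝 0, L (Y t) + b + t • N (t, Y t) = 0 := by
  set f : 𝕜 × E → F := fun p => L p.2 + b + p.1 • N p
  set u : 𝕜 × E := (0, -L.symm b)
  have hf : ContDiffAt 𝕜 ω f u := by fun_prop
  have hpartial : fderiv 𝕜 f u ∘L .inr 𝕜 𝕜 E = L := by
    have hcomp := (hf.differentiableAt (by simp)).hasFDerivAt.comp (-L.symm b)
      (hasFDerivAt_prodMk_right (0 : 𝕜) (-L.symm b))
    have hslice : f ∘ Prod.mk 0 = fun y => L y + b := by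
      ext y
      simp [f]
    rw [hslice] at hcomp
    exact hcomp.unique (L.hasFDerivAt.add_const b)
  have hinv : (fderiv 𝕜 f u ∘L .inr 𝕜 𝕜 E).IsInvertible := ⟨L, hpartial.symm⟩
  refine ⟨hf.implicitFunction (by simp) hinv,
    (hf.contDiffAt_implicitFunction (by simp) hinv).analyticAt, ?_⟩
  filter_upwards [hf.eventually_apply_implicitFunction (by simp) hinv] with t ht
  simpa [f, u] using ht

variable {κ μ : Type*} [Fintype κ] [Fintype μ]

section Riccati

open scoped Matrix.Norms.Elementwise

-- The equation is the invariance of the graph of `X`, after substituting `X = t • Y` and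
-- cancelling a factor `t`.
lemma exists_analyticAt_riccati [DecidableEq μ] {Δ : Matrix μ μ ℂ} (hΔ : IsUnit Δ)
    (A : Matrix κ κ ℂ) (B : Matrix μ κ ℂ) (C : Matrix κ μ ℂ) (D : Matrix μ μ ℂ) :
    ∃ Y : ℝ → Matrix μ κ ℂ, (∀ i j, AnalyticAt ℝ (fun t => Y t i j) 0) ∧
      ∀ᶠ t : ℝ in 𝓝 0, Δ * Y t + B + t • (D * Y t - Y t * A - t • (Y t * C * Y t)) = 0 := by
  obtain ⟨Δ, rfl⟩ := hΔ
  let L : Matrix μ κ ℂ ≃L[ℝ] Matrix μ κ ℂ := LinearEquiv.toContinuousLinearEquiv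
    { toFun := fun Z => Δ.1 * Z
      invFun := fun Z => Δ⁻¹.1 * Z
      map_add' := Matrix.mul_add _
      map_smul' := fun r Z => Matrix.mul_smul _ r Z
      left_inv := fun Z => by simp [← Matrix.mul_assoc]
      right_inv := fun Z => by simp [← Matrix.mul_assoc] }
  have hN : ContDiff ℝ ω fun p : ℝ × Matrix μ κ ℂ =>
      D * p.2 - p.2 * A - p.1 • (p.2 * C * p.2) := by
    refine contDiff_pi.2 fun i => contDiff_pi.2 fun j => ?_
    simp only [Matrix.sub_apply, Matrix.smul_apply, Matrix.mul_apply]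
    fun_prop
  obtain ⟨Y, hY, hsol⟩ := exists_analyticAt_eventually_add_smul_eq_zero L B hN
  exact ⟨Y, fun i j => analyticAt_pi_iff.1 (analyticAt_pi_iff.1 hY i) j, hsol⟩

end Riccati

variable [DecidableEq κ]

lemma fromBlocks_mul_fromRows_one {R : Type*} [Ring R] {A : Matrix κ κ R} {B : Matrix μ κ R}
    {C : Matrix κ μ R} {D : Matrix μ μ R} {X : Matrix μ κ R}
    (hX : B + D * X = X * (A + C * X)) :
    fromBlocks A C B D * fromRows (1 : Matrix κ κ R) X =
      fromRows (1 : Matrix κ κ R) X * (A + C * X) := by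
  rw [fromBlocks_mul_fromRows, fromRows_mul, Matrix.mul_one, Matrix.mul_one, Matrix.one_mul, hX]

theorem exists_analyticAt_invariant_graph [DecidableEq μ] (c : ℂ) {Δ : Matrix μ μ ℂ}
    (hΔ : IsUnit Δ) (M : Matrix (κ ⊕ μ) (κ ⊕ μ) ℂ) :
    ∃ F : ℝ → Matrix κ κ ℂ, (∀ i j, AnalyticAt ℝ (fun t => F t i j) 0) ∧
      ∀ᶠ t : ℝ in 𝓝 0, ∃ X : Matrix μ κ ℂ,
        (fromBlocks (c • 1) 0 0 (c • 1 + Δ) + t • M) * fromRows (1 : Matrix κ κ ℂ) X =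
          fromRows (1 : Matrix κ κ ℂ) X * (c • 1 + t • (M.toBlocks₁₁ + t • F t)) := by
  obtain ⟨Y, hY, hriccati⟩ := exists_analyticAt_riccati hΔ M.toBlocks₁₁ M.toBlocks₂₁
    M.toBlocks₁₂ M.toBlocks₂₂
  refine ⟨fun t => M.toBlocks₁₂ * Y t, fun i j => ?_, ?_⟩
  · simp only [Matrix.mul_apply]
    fun_prop
  filter_upwards [hriccati] with t ht
  refine ⟨t • Y t, ?_⟩
  have hE : c • 1 + t • (M.toBlocks₁₁ + t • (M.toBlocks₁₂ * Y t)) =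
      (c • 1 + t • M.toBlocks₁₁) + (t • M.toBlocks₁₂) * (t • Y t) := by
    simp only [smul_add, add_assoc, Matrix.smul_mul, Matrix.mul_smul]
  nth_rw 1 [← M.fromBlocks_toBlocks]
  rw [fromBlocks_smul, fromBlocks_add, zero_add, zero_add, hE]
  refine fromBlocks_mul_fromRows_one (sub_eq_zero.1 ?_)
  calc _ = t • (Δ * Y t + M.toBlocks₂₁ + t • (M.toBlocks₂₂ * Y t - Y t * M.toBlocks₁₁ -
          t • (Y t * M.toBlocks₁₂ * Y t))) := by
        simp only [Matrix.add_mul, Matrix.mul_add, Matrix.smul_mul, Matrix.mul_smul,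
          Matrix.one_mul, Matrix.mul_one, Matrix.mul_assoc]
        module
    _ = 0 := by rw [ht, smul_zero]

end AnalyticGraph

section InvariantFrame

-- A row `Ψ s` is a left eigenvector of `E` for `a s`, hence zero unless `a s` is an eigenvalue of
-- `E`; deleting the zero rows leaves the square matrix `P`.
lemma exists_isUnit_semiconjBy_diagonal {ι ν 𝕜 : Type*} [Fintype ι] [DecidableEq ι] [Fintype ν]
    [DecidableEq ν] [Field 𝕜] {a : ν → 𝕜} {Ψ : Matrix ν ι 𝕜} {L : Matrix ι ν 𝕜}
    {E : Matrix ι ι 𝕜} (hL : L * Ψ = 1) (hΨ : diagonal a * Ψ = Ψ * E) {f : ι → ν}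
    (hf : f.Injective) (hE : ∀ s, s ∉ Set.range f → IsUnit (a s • 1 - E)) :
    ∃ P, IsUnit P ∧ SemiconjBy P E (diagonal (a ∘ f)) := by
  have hrow (s : ν) : Ψ s ᵥ* E = a s • Ψ s := by
    ext j
    exact (congrFun₂ hΨ s j).symm.trans (diagonal_mul a Ψ s j)
  have hvanish (s : ν) (hs : s ∉ Set.range f) : Ψ s = 0 := by
    refine vecMul_injective_of_isUnit (hE s hs) ?_
    simp only [vecMul_sub, vecMul_smul, vecMul_one, hrow, sub_self, zero_vecMul,
      smul_zero]
  have hleft : L.submatrix id f * Ψ.submatrix f id = 1 := by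
    rw [← hL]
    ext i j
    simp only [Matrix.mul_apply, submatrix_apply, id_eq]
    refine Fintype.sum_of_injective f hf _ _ (fun s hs => ?_) fun _ => rfl
    rw [hvanish s hs, Pi.zero_apply, mul_zero]
  refine ⟨Ψ.submatrix f id, IsUnit.of_mul_eq_one_right _ hleft, ?_⟩
  ext i j
  rw [diagonal_mul]
  exact (congrFun₂ hΨ (f i) j).symm.trans (diagonal_mul a Ψ (f i) j)

lemma eventually_isUnit_smul_one_sub {α ι : Type*} [Fintype ι] [DecidableEq ι] {u : Filter α}
    {x : α → ℂ} {x₀ c : ℂ} (hx : Tendsto x u (𝓝 x₀)) {E : α → Matrix ι ι ℂ}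
    (hE : Tendsto E u (𝓝 (c • 1))) (hne : x₀ ≠ c) : ∀ᶠ t in u, IsUnit (x t • 1 - E t) := by
  have hdet : Tendsto (fun t => (x t • 1 - E t).det) u (𝓝 (x₀ • 1 - c • 1 : Matrix ι ι ℂ).det) :=
    (continuous_id.matrix_det.tendsto _).comp ((hx.smul_const 1).sub hE)
  have hne' : (x₀ • 1 - c • 1 : Matrix ι ι ℂ).det ≠ 0 := by
    rw [← sub_smul, det_smul, det_one, mul_one]
    exact pow_ne_zero _ (sub_ne_zero.2 hne)
  filter_upwards [hdet.eventually_ne hne'] with t ht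
  exact (Matrix.isUnit_iff_isUnit_det _).2 ht.isUnit

variable {k m : ℕ}

theorem traceVariance_eq_sqDeviation_eigs {H : Matrix (Fin (k + m)) (Fin (k + m)) ℂ}
    (hH : H.IsHermitian) {Φ : Matrix (Fin (k + m)) (Fin k) ℂ} {L : Matrix (Fin k) (Fin (k + m)) ℂ}
    {E : Matrix (Fin k) (Fin k) ℂ} (hL : L * Φ = 1) (hΦ : H * Φ = Φ * E)
    (hE : ∀ j, IsUnit ((eigs H (Fin.natAdd k j) : ℂ) • 1 - E)) :
    traceVariance E = (sqDeviation fun i => eigs H (Fin.castAdd m i) : ℂ) := by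
  obtain ⟨U, hU⟩ := exists_spectralMatrix_eigs_eq hH
  have hL' : (L * U.1) * (star U.1 * Φ) = 1 := by
    rw [Matrix.mul_assoc, ← Matrix.mul_assoc U.1, Unitary.mul_star_self_of_mem U.2,
      Matrix.one_mul, hL]
  have hΨ : diagonal (fun i => (eigs H i : ℂ)) * (star U.1 * Φ) = (star U.1 * Φ) * E := by
    rw [← Matrix.mul_assoc, ← star_mul_spectralMatrix, hU, Matrix.mul_assoc, hΦ, Matrix.mul_assoc]
  have hhigh (s : Fin (k + m)) (hs : s ∉ Set.range (Fin.castAdd m)) :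
      IsUnit ((eigs H s : ℂ) • 1 - E) := by
    cases s using Fin.addCases with
    | left i => exact absurd (Set.mem_range_self i) hs
    | right j => exact hE j
  obtain ⟨P, hP, hsemi⟩ :=
    exists_isUnit_semiconjBy_diagonal hL' hΨ (Fin.castAdd_injective k m) hhigh
  rw [traceVariance_eq_of_semiconjBy hP hsemi, ← traceVariance_diagonal_ofReal]
  rfl

end InvariantFrame

section OrderOfVanishing

lemma ord0_eq_analyticOrderAt {f : ℝ → ℝ} (hf : AnalyticAt ℝ f 0) :
    ord0 f = analyticOrderAt f 0 := by
  refine ENat.eq_of_forall_natCast_le_iff fun d => ?_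
  rw [natCast_le_analyticOrderAt_iff_iteratedDeriv_eq_zero hf, ord0, le_sInf_iff]
  constructor
  · intro h j hj
    by_contra hne
    exact absurd (Nat.cast_le.1 (h j ⟨j, rfl, hne⟩)) hj.not_ge
  · rintro h _ ⟨j, rfl, hne⟩
    exact Nat.cast_le.2 (not_lt.1 fun hj => hne (h j hj))

lemma natCast_le_ord0 {f g : ℝ → ℝ} {d : ℕ} (hf : AnalyticAt ℝ f 0) (hg : AnalyticAt ℝ g 0)
    (hfg : ∀ᶠ t in 𝓝 0, f t = t ^ d * g t) : d ≤ ord0 f := by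
  rw [ord0_eq_analyticOrderAt hf, natCast_le_analyticOrderAt hf]
  exact ⟨g, hg, by simpa using hfg⟩

lemma ord0_eq_natCast {f g : ℝ → ℝ} {d : ℕ} (hf : AnalyticAt ℝ f 0) (hg : AnalyticAt ℝ g 0)
    (hg0 : g 0 ≠ 0) (hfg : ∀ᶠ t in 𝓝 0, f t = t ^ d * g t) : ord0 f = d := by
  rw [ord0_eq_analyticOrderAt hf, hf.analyticOrderAt_eq_natCast]
  exact ⟨g, hg, hg0, by simpa using hfg⟩

lemma exists_analyticOnNhd_Ioo {f : ℝ → ℝ} (hf : AnalyticAt ℝ f 0) :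
    ∃ ε > 0, AnalyticOnNhd ℝ f (Set.Ioo (-ε) ε) := by
  obtain ⟨ε, hε, hball⟩ := Metric.eventually_nhds_iff_ball.1 hf.eventually_analyticAt
  refine ⟨ε, hε, fun t ht => hball t ?_⟩
  simpa [Real.ball_eq_Ioo] using ht

end OrderOfVanishing

section LinearFamily

variable {k m : ℕ}

lemma diagonal_submatrix_finSumFinEquiv {l : Fin (k + m) → ℝ} {c : ℝ}
    (hlow : ∀ i, l (Fin.castAdd m i) = c) :
    (diagonal fun i => (l i : ℂ)).submatrix finSumFinEquiv finSumFinEquiv =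
      fromBlocks ((c : ℂ) • 1) 0 0
        ((c : ℂ) • 1 + diagonal fun j => (l (Fin.natAdd k j) - c : ℂ)) := by
  rw [submatrix_diagonal_equiv, smul_one_eq_diagonal, smul_one_eq_diagonal, diagonal_add,
    fromBlocks_diagonal]
  congr 1
  ext (i | j) <;> simp [hlow]

theorem exists_analyticAt_invariant_frame {l : Fin (k + m) → ℝ} {c : ℝ}
    (hlow : ∀ i, l (Fin.castAdd m i) = c) (hhigh : ∀ j, l (Fin.natAdd k j) ≠ c)
    (H₁ : Matrix (Fin (k + m)) (Fin (k + m)) ℂ) :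
    ∃ F : ℝ → Matrix (Fin k) (Fin k) ℂ, (∀ i j, AnalyticAt ℝ (fun t => F t i j) 0) ∧
      ∀ᶠ t : ℝ in 𝓝 0, ∃ (Φ : Matrix (Fin (k + m)) (Fin k) ℂ)
        (L : Matrix (Fin k) (Fin (k + m)) ℂ), L * Φ = 1 ∧
          (diagonal (fun i => (l i : ℂ)) + t • H₁) * Φ = Φ * ((c : ℂ) • 1 +
            t • (H₁.submatrix (Fin.castAdd m) (Fin.castAdd m) + t • F t)) := by
  set e : Fin k ⊕ Fin m ≃ Fin (k + m) := finSumFinEquiv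
  have hΔ : IsUnit (diagonal fun j => (l (Fin.natAdd k j) - c : ℂ)) := by
    rw [isUnit_diagonal, Pi.isUnit_iff]
    exact fun j => (sub_ne_zero.2 (Complex.ofReal_injective.ne (hhigh j))).isUnit
  obtain ⟨F, hF, hgraph⟩ := exists_analyticAt_invariant_graph (c : ℂ) hΔ (H₁.submatrix e e)
  refine ⟨F, hF, hgraph.mono fun t => ?_⟩
  rintro ⟨X, hX⟩
  refine ⟨(fromRows 1 X).submatrix e.symm id,
    (fromCols (1 : Matrix (Fin k) (Fin k) ℂ) (0 : Matrix (Fin k) (Fin m) ℂ)).submatrix id e.symm,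
    ?_, ?_⟩
  · rw [submatrix_mul_equiv, fromCols_mul_fromRows]
    simp
  · rw [← diagonal_submatrix_finSumFinEquiv hlow] at hX
    calc (diagonal (fun i => (l i : ℂ)) + t • H₁) * (fromRows 1 X).submatrix e.symm id
        = ((diagonal (fun i => (l i : ℂ)) + t • H₁).submatrix e e *
            fromRows (1 : Matrix (Fin k) (Fin k) ℂ) X).submatrix e.symm id := by
          rw [← submatrix_mul_equiv _ _ e.symm e.symm id]
          simp
      _ = _ := congrArg (fun M => M.submatrix e.symm id) hX

lemma tendsto_eigs_diagonal_add_smul {n : ℕ} {l : Fin n → ℝ} (hl : Monotone l)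
    {H₁ : Matrix (Fin n) (Fin n) ℂ} (hH₁ : H₁.IsHermitian) (i : Fin n) :
    Tendsto (fun t : ℝ => eigs (diagonal (fun i => (l i : ℂ)) + t • H₁) i) (𝓝 0) (𝓝 (l i)) := by
  have h := tendsto_eigs_add_smul (isHermitian_spectralMatrix 1 l) hH₁ i
  rwa [eigs_spectralMatrix 1 hl, spectralMatrix_one] at h

lemma eventually_eigs_low_lt_high {l : Fin (k + m) → ℝ} (hl : Monotone l)
    (hgap : ∀ i j, l (Fin.castAdd m i) < l (Fin.natAdd k j))
    {H₁ : Matrix (Fin (k + m)) (Fin (k + m)) ℂ} (hH₁ : H₁.IsHermitian) :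
    ∀ᶠ t : ℝ in 𝓝 0, ∀ i j, eigs (diagonal (fun i => (l i : ℂ)) + t • H₁) (Fin.castAdd m i) <
      eigs (diagonal (fun i => (l i : ℂ)) + t • H₁) (Fin.natAdd k j) := by
  have hlim := tendsto_eigs_diagonal_add_smul hl hH₁
  exact eventually_all.2 fun i => eventually_all.2 fun j =>
    (hlim (Fin.castAdd m i)).eventually_lt (hlim (Fin.natAdd k j)) (hgap i j)

theorem exists_analyticAt_sqDist_eq (hk : 0 < k) {l : Fin (k + m) → ℝ} (hl : Monotone l) {c : ℝ}
    (hlow : ∀ i, l (Fin.castAdd m i) = c) (hhigh : ∀ j, c < l (Fin.natAdd k j))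
    {H₁ : Matrix (Fin (k + m)) (Fin (k + m)) ℂ} (hH₁ : H₁.IsHermitian) :
    ∃ F : ℝ → Matrix (Fin k) (Fin k) ℂ, (∀ i j, AnalyticAt ℝ (fun t => F t i j) 0) ∧
      ∀ᶠ t : ℝ in 𝓝 0, sqDist k (diagonal (fun i => (l i : ℂ)) + t • H₁) =
        t ^ 2 * (traceVariance
          (H₁.submatrix (Fin.castAdd m) (Fin.castAdd m) + t • F t)).re := by
  obtain ⟨F, hF, hframe⟩ := exists_analyticAt_invariant_frame hlow (fun j => (hhigh j).ne') H₁
  set A := H₁.submatrix (Fin.castAdd m) (Fin.castAdd m)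
  set E : ℝ → Matrix (Fin k) (Fin k) ℂ := fun t => (c : ℂ) • 1 + t • (A + t • F t)
  have hE : Tendsto E (𝓝 0) (𝓝 ((c : ℂ) • 1)) := by
    have hFcont : ContinuousAt F 0 :=
      continuousAt_pi.2 fun i => continuousAt_pi.2 fun j => (hF i j).continuousAt
    have hEcont : ContinuousAt E 0 := by fun_prop
    simpa [E] using hEcont.tendsto
  have hunit : ∀ᶠ t : ℝ in 𝓝 0, ∀ j : Fin m, IsUnit
      ((eigs (diagonal (fun i => (l i : ℂ)) + t • H₁) (Fin.natAdd k j) : ℂ) • 1 - E t) :=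
    eventually_all.2 fun j => eventually_isUnit_smul_one_sub
      ((Complex.continuous_ofReal.tendsto _).comp (tendsto_eigs_diagonal_add_smul hl hH₁ _)) hE
      (Complex.ofReal_injective.ne (hhigh j).ne')
  have hgap := eventually_eigs_low_lt_high hl (fun i j => (hlow i).trans_lt (hhigh j)) hH₁
  refine ⟨F, hF, ?_⟩
  filter_upwards [hframe, hunit, hgap] with t ⟨Φ, L, hL, hΦ⟩ hunit_t hgap_t
  have : NeZero k := ⟨hk.ne'⟩
  have hH : (diagonal (fun i => (l i : ℂ)) + t • H₁).IsHermitian :=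
    (isHermitian_diagonal_ofReal l).add (hH₁.smul (IsSelfAdjoint.all t))
  have hvar := traceVariance_eq_sqDeviation_eigs hH hL hΦ hunit_t
  rw [← Complex.coe_smul t (_ + _), traceVariance_smul_one_add_smul, ← Complex.ofReal_pow] at hvar
  rw [sqDist_eq_sqDeviation hk hH hgap_t, ← Complex.re_ofReal_mul, hvar, Complex.ofReal_re]

lemma forall_eq_ite_iff_submatrix_eq_smul_one {M : Matrix (Fin (k + m)) (Fin (k + m)) ℂ} {c : ℂ} :
    (∀ a b : Fin (k + m), (a : ℕ) < k → (b : ℕ) < k → M a b = if a = b then c else 0) ↔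
      M.submatrix (Fin.castAdd m) (Fin.castAdd m) = c • 1 := by
  constructor
  · intro h
    ext i j
    simpa [Matrix.one_apply] using h (Fin.castAdd m i) (Fin.castAdd m j) i.isLt j.isLt
  · intro h a b ha hb
    simpa [Matrix.one_apply, Fin.ext_iff] using congrFun₂ h ⟨a, ha⟩ ⟨b, hb⟩

end LinearFamily

/-- **Order of energy splitting for a linear perturbation:** for a diagonal `H₀ ∈ Σ_k` and
Hermitian `H₁`, the function `g(t) = d(H₀ + t·H₁, Σ_k)²` is real-analytic near `0`; if the
upper-left `k × k` block of `H₁` is a real scalar matrix (i.e. `H₁` is tangent to `Σ_k` at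
`H₀`) then `ord₀(g) ≥ 4`, otherwise `ord₀(g) = 2`. -/
theorem order_splitting_linear_family {n k : ℕ} (hk2 : 2 ≤ k) (hkn : k < n)
    (l : Fin n → ℝ) (hmono : Monotone l)
    (hdeg : ∀ i j : Fin n, (i : ℕ) < k → (j : ℕ) < k → l i = l j)
    (hgap : ∀ i j : Fin n, (i : ℕ) < k → (j : ℕ) = k → l i < l j)
    (H₁ : Matrix (Fin n) (Fin n) ℂ) (hH₁ : H₁.IsHermitian) :
    (∃ ε > 0, AnalyticOnNhd ℝ
      (fun t : ℝ => (sInf ((fun G =>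
        frobNorm (Matrix.diagonal (fun i => (l i : ℂ)) + t • H₁ - G)) '' SigmaSet n k)) ^ 2)
      (Set.Ioo (-ε) ε)) ∧
    ((∃ c : ℝ, ∀ a b : Fin n, (a : ℕ) < k → (b : ℕ) < k →
        H₁ a b = if a = b then (c : ℂ) else 0) →
      (4 : ℕ∞) ≤ ord0 (fun t : ℝ => (sInf ((fun G =>
        frobNorm (Matrix.diagonal (fun i => (l i : ℂ)) + t • H₁ - G)) '' SigmaSet n k)) ^ 2)) ∧
    (¬ (∃ c : ℝ, ∀ a b : Fin n, (a : ℕ) < k → (b : ℕ) < k →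
        H₁ a b = if a = b then (c : ℂ) else 0) →
      ord0 (fun t : ℝ => (sInf ((fun G =>
        frobNorm (Matrix.diagonal (fun i => (l i : ℂ)) + t • H₁ - G)) '' SigmaSet n k)) ^ 2)
        = (2 : ℕ∞)) := by
  have hk : 0 < k := by omega
  have : NeZero k := ⟨hk.ne'⟩
  obtain ⟨m, rfl⟩ := Nat.exists_eq_add_of_le hkn.le
  obtain ⟨c, hlow, hhigh⟩ := (degenerate_and_gap_iff hmono hk).1 ⟨hdeg, hgap⟩
  obtain ⟨F, hF, heq⟩ := exists_analyticAt_sqDist_eq hk hmono hlow hhigh hH₁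
  set A := H₁.submatrix (Fin.castAdd m) (Fin.castAdd m)
  have hvar : AnalyticAt ℝ (fun t => (traceVariance (A + t • F t)).re) 0 :=
    analyticAt_re_traceVariance fun i j =>
      analyticAt_const.fun_add (analyticAt_id.fun_smul (hF i j))
  have hdist : AnalyticAt ℝ (fun t : ℝ => sqDist k (diagonal (fun i => (l i : ℂ)) + t • H₁)) 0 :=
    ((analyticAt_id.pow 2).mul hvar).congr (heq.mono fun _ h => h.symm)
  simp only [forall_eq_ite_iff_submatrix_eq_smul_one]
  refine ⟨exists_analyticOnNhd_Ioo hdist, ?_, fun hA => ?_⟩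
  · rintro ⟨γ, hγ⟩
    refine natCast_le_ord0 hdist (analyticAt_re_traceVariance hF) (heq.mono fun t ht => ?_)
    refine ht.trans ?_
    rw [show A = _ from hγ, ← Complex.coe_smul t, traceVariance_smul_one_add_smul,
      ← Complex.ofReal_pow, Complex.re_ofReal_mul]
    ring
  · refine ord0_eq_natCast hdist hvar ?_ heq
    rw [zero_smul, add_zero]
    exact mt (re_traceVariance_eq_zero_iff (hH₁.submatrix _)).1 hA

end
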